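/- Let θ^1, θ^2 be real numbers that are linearly independent over ℤ together with 1 (no nonzero integer triple (a,b,c) satisfies aθ^1 + bθ^2 + c = 0). Then with φ = (1+√5)/2 there exists a sequence of integer pairs (x_1(i), x_2(i)) with x_1(i) > 0 and x_2(i) > 0 such that ‖θ^1 x_1(i) + θ^2 x_2(i)‖ · (max(x_1(i), x_2(i)))^φ → 0 as i → ∞. -/

import Mathlib

open Filter

/-- Distance from a real number to the nearest integer. -/
noncomputable def nint (x : ℝ) : ℝ := |x - round x|

/-!
Let `L` be the linear form and `H` the height, and suppose that `ε ≤ |L y| * H(y) ^ φ` at all `y`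
with positive first two coordinates. Consecutive best approximations `u`, `v` satisfy
`|L u| * H(v) ^ 2 ≤ 4`, so in the late ones these two coordinates never have the same sign. If the
minor of `u` and `v` were comparable to `H(v) ^ 2`, a multiple of `u` shifted by a multiple of `v`
would be a positive point that is too good. As the minor is smaller, completing `u`, `v` to a basis
of `ℤ³` produces another positive point, and the supposition at this point bounds
`|L u| * H(v) ^ (φ + 1)`.

On the other hand, three consecutive best approximations `u`, `v`, `w` are linearly independent
infinitely often, and expanding their determinant shows that the minor of `v` and `w` is then at
least of the order of `H(v) ^ 2`. A multiple of `w` shifted by a multiple of `v` is therefore a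
positive point `y` with `H(y) ≪ H(w)` and `|L y| * H(v) ≪ |L v| * H(w)`. Thus
`ε * H(v) ≪ |L v| * H(w) ^ (φ + 1)` is bounded, which is absurd.
-/

open Matrix
open scoped goldenRatio

/-- The linear form `s * x 0 + t * x 1 + x 2` on `ℤ³`. -/
noncomputable def linForm (s t : ℝ) : (Fin 3 → ℤ) →ₗ[ℤ] ℝ where
  toFun x := s * x 0 + t * x 1 + x 2
  map_add' x y := by simp only [Pi.add_apply]; push_cast; ring
  map_smul' a x := by
    simp only [Pi.smul_apply, smul_eq_mul, zsmul_eq_mul, eq_intCast, Int.cast_id]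
    push_cast
    ring

/-- The height of an integer vector: the sup norm of its first two coordinates. It is real-valued
because it is only ever compared with values of linear forms. -/
noncomputable def height (x : Fin 3 → ℤ) : ℝ := max |(x 0 : ℝ)| |(x 1 : ℝ)|

/-- The minor of two integer vectors on their first two coordinates, that is `(u ⨯₃ v) 2`. -/
def minor (u v : Fin 3 → ℤ) : ℤ := u 0 * v 1 - u 1 * v 0

/-- The minor of two integer vectors formed from the values of the linear form and the `i`-th
coordinates; it is a component of the cross product of `u ⨯₃ v` with `![s, t, 1]`. -/
noncomputable def formMinor (s t : ℝ) (u v : Fin 3 → ℤ) (i : Fin 3) : ℝ :=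
  linForm s t u * v i - linForm s t v * u i

/-- `u` minimizes the absolute value of the linear form among the nonzero vectors of height at most
that of `u`. -/
structure IsBestApprox (s t : ℝ) (u : Fin 3 → ℤ) : Prop where
  ne_zero : u ≠ 0
  abs_linForm_le : ∀ z, z ≠ 0 → height z ≤ height u → |linForm s t u| ≤ |linForm s t z|

/-- `v` is the best approximation following `u`: it has the least height among the vectors at which
the linear form is smaller than at `u`. -/
structure ConsecutiveBestApprox (s t : ℝ) (u v : Fin 3 → ℤ) : Prop where
  height_lt : height u < height v
  abs_linForm_lt : |linForm s t v| < |linForm s t u|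
  isBestApprox : IsBestApprox s t v
  abs_linForm_le : ∀ z, z ≠ 0 → height z < height v → |linForm s t u| ≤ |linForm s t z|

section Basic

variable {s t : ℝ} {u v w : Fin 3 → ℤ} {i : Fin 3}

lemma linForm_apply (s t : ℝ) (x : Fin 3 → ℤ) : linForm s t x = s * x 0 + t * x 1 + x 2 := rfl

lemma linForm_smul (s t : ℝ) (a : ℤ) (x : Fin 3 → ℤ) :
    linForm s t (a • x) = a * linForm s t x := by
  rw [map_smul, zsmul_eq_mul]

lemma height_nonneg (x : Fin 3 → ℤ) : 0 ≤ height x := le_max_of_le_left (abs_nonneg _)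

lemma abs_le_height (hi : i ≠ 2) (x : Fin 3 → ℤ) : |(x i : ℝ)| ≤ height x := by
  fin_cases i
  · exact le_max_left _ _
  · exact le_max_right _ _
  · exact absurd rfl hi

lemma exists_abs_eq_height (x : Fin 3 → ℤ) : ∃ i ≠ 2, |(x i : ℝ)| = height x := by
  rcases max_choice |(x 0 : ℝ)| |(x 1 : ℝ)| with h | h
  · exact ⟨0, by decide, h.symm⟩
  · exact ⟨1, by decide, h.symm⟩

lemma height_smul (a : ℤ) (x : Fin 3 → ℤ) : height (a • x) = |(a : ℝ)| * height x := by
  simp only [height, Pi.smul_apply, smul_eq_mul, Int.cast_mul, abs_mul]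
  exact (mul_max_of_nonneg _ _ (abs_nonneg _)).symm

lemma height_neg (x : Fin 3 → ℤ) : height (-x) = height x := by simp [height]

lemma height_add_le (x y : Fin 3 → ℤ) : height (x + y) ≤ height x + height y := by
  simp only [height, Pi.add_apply, Int.cast_add]
  exact max_le ((abs_add_le _ _).trans (add_le_add (le_max_left _ _) (le_max_left _ _)))
    ((abs_add_le _ _).trans (add_le_add (le_max_right _ _) (le_max_right _ _)))

lemma minor_comm (u v : Fin 3 → ℤ) : minor v u = -minor u v := by
  simp only [minor]; ring

lemma minor_smul_right (a : ℤ) (u v : Fin 3 → ℤ) : minor u (a • v) = a * minor u v := by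
  simp only [minor, Pi.smul_apply, smul_eq_mul]; ring

lemma abs_minor_le (u v : Fin 3 → ℤ) : |(minor u v : ℝ)| ≤ 2 * (height u * height v) := by
  have h01 := mul_le_mul (abs_le_height (i := 0) (by decide) u)
    (abs_le_height (i := 1) (by decide) v) (abs_nonneg _) (height_nonneg u)
  have h10 := mul_le_mul (abs_le_height (i := 1) (by decide) u)
    (abs_le_height (i := 0) (by decide) v) (abs_nonneg _) (height_nonneg u)
  rw [← abs_mul] at h01 h10
  rw [minor, Int.cast_sub, Int.cast_mul, Int.cast_mul]
  linarith [abs_sub ((u 0 : ℝ) * v 1) (u 1 * v 0)]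

lemma formMinor_comm (s t : ℝ) (u v : Fin 3 → ℤ) (i : Fin 3) :
    formMinor s t v u i = -formMinor s t u v i := by
  simp only [formMinor]; ring

lemma formMinor_smul_right (s t : ℝ) (a : ℤ) (u v : Fin 3 → ℤ) (i : Fin 3) :
    formMinor s t u (a • v) i = a * formMinor s t u v i := by
  simp only [formMinor, linForm_smul, Pi.smul_apply, smul_eq_mul, Int.cast_mul]; ring

lemma formMinor_add_smul_left (s t : ℝ) (a : ℤ) (u v w : Fin 3 → ℤ) (i : Fin 3) :
    formMinor s t v (w + a • u) i = formMinor s t v w i - a * formMinor s t u v i := by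
  simp only [formMinor, map_add, linForm_smul, Pi.add_apply, Pi.smul_apply, smul_eq_mul,
    Int.cast_add, Int.cast_mul]
  ring

lemma formMinor_eq_linForm (s t : ℝ) (u v : Fin 3 → ℤ) (i : Fin 3) :
    formMinor s t u v i = linForm s t (v i • u - u i • v) := by
  rw [formMinor, map_sub, linForm_smul, linForm_smul]; ring

lemma abs_formMinor_le (hi : i ≠ 2) (s t : ℝ) (u v : Fin 3 → ℤ) :
    |formMinor s t u v i| ≤ |linForm s t u| * height v + |linForm s t v| * height u := by
  refine (abs_sub _ _).trans ?_
  rw [abs_mul, abs_mul]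
  gcongr <;> exact abs_le_height hi _

lemma formMinor_eq_mul_of_cross_eq_smul {u' v' : Fin 3 → ℤ} {c : ℤ}
    (h : u' ⨯₃ v' = c • u ⨯₃ v) (s t : ℝ) (i : Fin 3) :
    formMinor s t u' v' i = c * formMinor s t u v i := by
  have h' (j : Fin 3) : ((u' ⨯₃ v') j : ℝ) = c * (u ⨯₃ v) j := by
    rw [h, Pi.smul_apply, smul_eq_mul, Int.cast_mul]
  have h₀ := h' 0
  have h₁ := h' 1
  have h₂ := h' 2
  simp only [cross_apply, cons_val, Int.cast_sub, Int.cast_mul] at h₀ h₁ h₂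
  fin_cases i <;> simp only [formMinor, linForm_apply, Fin.reduceFinMk]
  · linear_combination h₁ - t * h₂
  · linear_combination s * h₂ - h₀
  · linear_combination t * h₀ - s * h₁

/-- The determinant is unchanged when its last column is replaced by the values of the linear form,
and the identity becomes a Plücker relation. -/
lemma tripleProduct_mul_eq (hi : i ≠ 2) (s t : ℝ) (u v w : Fin 3 → ℤ) :
    ((w ⬝ᵥ u ⨯₃ v : ℤ) : ℝ) * v i =
      minor v w * formMinor s t u v i - minor u v * formMinor s t v w i := by
  simp only [cross_apply, vec3_dotProduct, minor, formMinor, linForm_apply, cons_val]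
  push_cast
  fin_cases i
  · simp only [Fin.zero_eta]; ring
  · simp only [Fin.mk_one]; ring
  · exact absurd rfl hi

end Basic

section Dirichlet

lemma exists_int_abs_sum_mul_sub_le {ι : Type*} [Fintype ι] [Nonempty ι] (θ : ι → ℝ) {N : ℕ}
    (hN : 0 < N) :
    ∃ z : ι → ℤ, z ≠ 0 ∧ (∀ i, |z i| ≤ N) ∧
      ∃ c : ℤ, |∑ i, θ i * z i - c| * (N : ℝ) ^ Fintype.card ι ≤ 1 := by
  classical
  set M : ℝ := (N : ℝ) ^ Fintype.card ι
  have hM0 : 0 < M := by positivity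
  let σ (p : ι → ℕ) : ℝ := ∑ i, θ i * p i
  have hcard : (Finset.range (N ^ Fintype.card ι)).card <
      (Fintype.piFinset fun _ : ι => Finset.range (N + 1)).card := by
    simpa using Nat.pow_lt_pow_left N.lt_succ_self Fintype.card_ne_zero
  have hmaps : ∀ p ∈ Fintype.piFinset fun _ : ι => Finset.range (N + 1),
      ⌊Int.fract (σ p) * M⌋₊ ∈ Finset.range (N ^ Fintype.card ι) := fun p _ => by
    rw [Finset.mem_range, Nat.floor_lt (mul_nonneg (Int.fract_nonneg _) hM0.le), Nat.cast_pow]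
    exact mul_lt_of_lt_one_left hM0 (Int.fract_lt_one _)
  obtain ⟨p, hp, q, hq, hpq, hfloor⟩ := Finset.exists_ne_map_eq_of_card_lt_of_maps_to hcard hmaps
  simp only [Fintype.mem_piFinset, Finset.mem_range] at hp hq
  refine ⟨fun i => p i - q i, fun h => hpq ?_, fun i => ?_, ⌊σ p⌋ - ⌊σ q⌋, ?_⟩
  · funext i
    exact_mod_cast sub_eq_zero.1 (congrFun h i)
  · have := hp i
    have := hq i
    rw [abs_le]
    lia
  · have hsum : ∑ i, θ i * ((p i - q i : ℤ) : ℝ) - ((⌊σ p⌋ - ⌊σ q⌋ : ℤ) : ℝ) =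
        Int.fract (σ p) - Int.fract (σ q) := by
      simp only [Int.fract, σ, Int.cast_sub, Int.cast_natCast, mul_sub, Finset.sum_sub_distrib]
      ring
    rw [hsum, ← abs_of_pos hM0, ← abs_mul, sub_mul]
    have hfract (r : ι → ℕ) : 0 ≤ Int.fract (σ r) * M := mul_nonneg (Int.fract_nonneg _) hM0.le
    exact (Int.abs_sub_lt_one_of_floor_eq_floor <| by
      rw [← Int.natCast_floor_eq_floor (hfract p), ← Int.natCast_floor_eq_floor (hfract q),
        hfloor]).le

lemma exists_ne_zero_abs_linForm_mul_sq_le (s t : ℝ) {N : ℕ} (hN : 0 < N) :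
    ∃ z ≠ 0, height z ≤ N ∧ |linForm s t z| * (N : ℝ) ^ 2 ≤ 1 := by
  obtain ⟨z, hz, hzN, c, hc⟩ := exists_int_abs_sum_mul_sub_le ![s, t] hN
  refine ⟨![z 0, z 1, -c], fun h => hz ?_, max_le ?_ ?_, ?_⟩
  · have h0 := congrFun h 0
    have h1 := congrFun h 1
    funext i
    fin_cases i
    · exact h0
    · exact h1
  · exact_mod_cast hzN 0
  · exact_mod_cast hzN 1
  · simpa [linForm_apply, Fin.sum_univ_two, sub_eq_add_neg] using hc

lemma exists_ne_zero_abs_linForm_lt (s t : ℝ) {δ : ℝ} (hδ : 0 < δ) :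
    ∃ z ≠ 0, |linForm s t z| < δ := by
  obtain ⟨n, hn⟩ := exists_nat_one_div_lt hδ
  obtain ⟨z, hz, -, hzL⟩ := exists_ne_zero_abs_linForm_mul_sq_le s t n.succ_pos
  refine ⟨z, hz, lt_of_le_of_lt ?_ hn⟩
  rw [le_div_iff₀ (by positivity)]
  refine le_trans ?_ hzL
  push_cast
  gcongr
  exact le_self_pow₀ (by linarith [n.cast_nonneg (α := ℝ)]) two_ne_zero

end Dirichlet

section BestApprox

variable {s t : ℝ} {u v : Fin 3 → ℤ}

lemma finite_setOf_height_le_abs_linForm_le (s t B C : ℝ) :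
    {z | height z ≤ B ∧ |linForm s t z| ≤ C}.Finite := by
  set M : ℤ := ⌈max B (C + |s| * B + |t| * B)⌉
  refine (Set.finite_Icc (fun _ : Fin 3 => -M) fun _ => M).subset fun z ⟨hzB, hzC⟩ => ?_
  have h0 : |(z 0 : ℝ)| ≤ B := (abs_le_height (by decide) z).trans hzB
  have h1 : |(z 1 : ℝ)| ≤ B := (abs_le_height (by decide) z).trans hzB
  have h2 : |(z 2 : ℝ)| ≤ C + |s| * B + |t| * B := calc
    |(z 2 : ℝ)| = |linForm s t z - s * z 0 - t * z 1| := by rw [linForm_apply]; ring_nf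
    _ ≤ |linForm s t z| + |s| * |(z 0 : ℝ)| + |t| * |(z 1 : ℝ)| := by
      rw [← abs_mul, ← abs_mul]
      exact (abs_sub _ _).trans (by gcongr; exact abs_sub _ _)
    _ ≤ _ := by gcongr
  have habs (i : Fin 3) : |z i| ≤ M := by
    rw [← Int.cast_le (R := ℝ), Int.cast_abs]
    refine le_trans ?_ (Int.le_ceil _)
    fin_cases i
    · exact h0.trans (le_max_left _ _)
    · exact h1.trans (le_max_left _ _)
    · exact h2.trans (le_max_right _ _)
  exact ⟨fun i => (abs_le.1 (habs i)).1, fun i => (abs_le.1 (habs i)).2⟩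

lemma isBestApprox_single (s t : ℝ) : IsBestApprox s t (Pi.single 2 1) where
  ne_zero := by simp
  abs_linForm_le z hz hle := by
    have h0 : height (Pi.single 2 1) = 0 := by simp [height]
    rw [h0] at hle
    have hz0 : z 0 = 0 := by
      simpa using (abs_le_height (i := 0) (by decide) z).trans hle
    have hz1 : z 1 = 0 := by
      simpa using (abs_le_height (i := 1) (by decide) z).trans hle
    have hz2 : z 2 ≠ 0 := fun hz2 => hz <| by
      funext i
      fin_cases i
      exacts [hz0, hz1, hz2]
    simpa [linForm_apply, hz0, hz1] using (by exact_mod_cast Int.one_le_abs hz2 : 1 ≤ |(z 2 : ℝ)|)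

lemma IsBestApprox.exists_consecutive (hu : IsBestApprox s t u) (hL : linForm s t u ≠ 0) :
    ∃ v, ConsecutiveBestApprox s t u v := by
  obtain ⟨z₀, hz₀, hz₀L⟩ := exists_ne_zero_abs_linForm_lt s t (abs_pos.2 hL)
  let S : Set (Fin 3 → ℤ) := {z | z ≠ 0 ∧ height z ≤ height z₀ ∧ |linForm s t z| < |linForm s t u|}
  have hS : S.Finite := (finite_setOf_height_le_abs_linForm_le s t (height z₀) _).subset
    fun z hz => ⟨hz.2.1, hz.2.2.le⟩
  obtain ⟨v, ⟨hv, hvz₀, hvL⟩, hmin⟩ := Set.exists_min_image S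
    (fun z => toLex (height z, |linForm s t z|)) hS ⟨z₀, hz₀, le_rfl, hz₀L⟩
  have hlex : ∀ z ≠ 0, height z ≤ height v → |linForm s t z| < |linForm s t u| →
      height v = height z ∧ |linForm s t v| ≤ |linForm s t z| := fun z hz hzv hzL =>
    (Prod.Lex.toLex_le_toLex.1 (hmin z ⟨hz, hzv.trans hvz₀, hzL⟩)).resolve_left hzv.not_gt
  refine ⟨v, ⟨?_, hvL, ⟨hv, fun z hz hzv => ?_⟩, fun z hz hzv => ?_⟩⟩
  · by_contra! hvu
    exact (hu.abs_linForm_le v hv hvu).not_gt hvL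
  · by_contra! hzL
    exact (hlex z hz hzv (hzL.trans hvL)).2.not_gt hzL
  · by_contra! hzL
    exact hzv.ne' (hlex z hz hzv.le hzL).1

lemma exists_seq_consecutiveBestApprox (hinj : Function.Injective (linForm s t)) :
    ∃ x : ℕ → Fin 3 → ℤ, ∀ k, ConsecutiveBestApprox s t (x k) (x (k + 1)) := by
  have hnext (u : {u // IsBestApprox s t u}) :
      ∃ v : {v // IsBestApprox s t v}, ConsecutiveBestApprox s t u v := by
    obtain ⟨v, huv⟩ := u.2.exists_consecutive ((map_ne_zero_iff _ hinj).2 u.2.ne_zero)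
    exact ⟨⟨v, huv.isBestApprox⟩, huv⟩
  choose next hnext using hnext
  refine ⟨fun k => next^[k] ⟨_, isBestApprox_single s t⟩, fun k => ?_⟩
  simp only [Function.iterate_succ_apply']
  exact hnext _

end BestApprox

lemma exists_int_two_mul_abs_sub_mul_le (a : ℝ) {b : ℝ} (hb : b ≠ 0) :
    ∃ c : ℤ, 2 * |a - c * b| ≤ |b| := by
  refine ⟨round (a / b), ?_⟩
  have hab : a - round (a / b) * b = (a / b - round (a / b)) * b := by
    rw [sub_mul, div_mul_cancel₀ a hb]
  rw [hab, abs_mul]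
  nlinarith [abs_sub_round (a / b), abs_nonneg b]

namespace ConsecutiveBestApprox

variable {s t : ℝ} {u v w : Fin 3 → ℤ} {i : Fin 3}

lemma height_pos (h : ConsecutiveBestApprox s t u v) : 0 < height v :=
  (height_nonneg u).trans_lt h.height_lt

lemma abs_linForm_pos (h : ConsecutiveBestApprox s t u v) : 0 < |linForm s t u| :=
  (abs_nonneg _).trans_lt h.abs_linForm_lt

lemma neg_right (h : ConsecutiveBestApprox s t u v) : ConsecutiveBestApprox s t u (-v) where
  height_lt := (height_neg v).symm ▸ h.height_lt
  abs_linForm_lt := by rw [map_neg, abs_neg]; exact h.abs_linForm_lt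
  isBestApprox :=
    { ne_zero := neg_ne_zero.2 h.isBestApprox.ne_zero
      abs_linForm_le := by
        rw [map_neg, abs_neg, height_neg]; exact h.isBestApprox.abs_linForm_le }
  abs_linForm_le := by rw [height_neg]; exact h.abs_linForm_le

lemma abs_linForm_mul_height_sq_le (h : ConsecutiveBestApprox s t u v) :
    |linForm s t u| * height v ^ 2 ≤ 4 := by
  rcases le_or_gt (height v) 1 with hv | hv
  · have hu : |linForm s t u| ≤ 1 := by
      refine (h.abs_linForm_le (Pi.single 2 1) (by simp) ?_).trans_eq (by simp [linForm_apply])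
      simpa [height] using h.height_pos
    nlinarith [pow_le_one₀ h.height_pos.le hv (n := 2), h.abs_linForm_pos]
  · have hceil : 1 < ⌈height v⌉₊ := Nat.lt_ceil.2 (by exact_mod_cast hv)
    obtain ⟨N, hN⟩ := Nat.exists_eq_add_of_lt hceil
    obtain ⟨z, hz, hzN, hzL⟩ := exists_ne_zero_abs_linForm_mul_sq_le s t N.succ_pos
    have hNv : ((N + 1 : ℕ) : ℝ) < height v := Nat.lt_ceil.1 (by lia)
    have hvN : height v ≤ 2 * (N + 1 : ℕ) := by
      refine (Nat.le_ceil _).trans ?_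
      rw [hN]
      push_cast
      linarith [N.cast_nonneg (α := ℝ)]
    calc |linForm s t u| * height v ^ 2
        ≤ |linForm s t z| * (2 * (N + 1 : ℕ)) ^ 2 := by
          have := h.height_pos.le
          have := h.abs_linForm_le z hz (hzN.trans_lt hNv)
          gcongr
      _ = 4 * (|linForm s t z| * (N + 1 : ℕ) ^ 2) := by ring
      _ ≤ 4 := by linarith

lemma abs_formMinor_le_two_mul (h : ConsecutiveBestApprox s t u v) (hi : i ≠ 2) :
    |formMinor s t u v i| ≤ 2 * (|linForm s t u| * height v) := by
  have hvu := mul_le_mul h.abs_linForm_lt.le h.height_lt.le (height_nonneg u) (abs_nonneg _)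
  linarith [abs_formMinor_le hi s t u v]

lemma linearIndependent (h : ConsecutiveBestApprox s t u v) : LinearIndependent ℤ ![u, v] := by
  rw [LinearIndependent.pair_iff]
  intro a b hab
  have hsmul : a • u = (-b) • v := by rw [neg_smul]; exact eq_neg_of_add_eq_zero_left hab
  have hheight : |(a : ℝ)| * height u = |(b : ℝ)| * height v := by
    rw [← height_smul, hsmul, height_smul, Int.cast_neg, abs_neg]
  have hform : |(a : ℝ)| * |linForm s t u| = |(b : ℝ)| * |linForm s t v| := by
    rw [← abs_mul, ← linForm_smul, hsmul, linForm_smul, abs_mul, Int.cast_neg, abs_neg]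
  have hb : b = 0 := by
    by_contra hb
    have hb0 : 0 < |(b : ℝ)| := abs_pos.2 (Int.cast_ne_zero.2 hb)
    have hlt : |(b : ℝ)| < |(a : ℝ)| := lt_of_mul_lt_mul_right
      (hheight ▸ mul_lt_mul_of_pos_left h.height_lt hb0) (height_nonneg u)
    exact (mul_lt_mul'' hlt h.abs_linForm_lt hb0.le (abs_nonneg _)).ne' hform
  refine ⟨?_, hb⟩
  rw [hb, Int.cast_zero, abs_zero, zero_mul] at hform
  simpa [h.abs_linForm_pos.ne'] using hform

lemma eq_zero_of_smul_eq (h : ConsecutiveBestApprox s t u v) {m a b : ℤ} (hm : m ≠ 0)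
    (ha : 2 * |(a : ℝ)| ≤ |(m : ℝ)|) (hb : 2 * |(b : ℝ)| ≤ |(m : ℝ)|) {z : Fin 3 → ℤ}
    (hz : m • z = a • u + b • v) : z = 0 := by
  by_contra hz0
  have hm0 : 0 < |(m : ℝ)| := abs_pos.2 (Int.cast_ne_zero.2 hm)
  have hheight : |(m : ℝ)| * height z < |(m : ℝ)| * height v := by
    rw [← height_smul, hz]
    refine (height_add_le _ _).trans_lt ?_
    rw [height_smul, height_smul]
    nlinarith [h.height_lt, height_nonneg u, h.height_pos]
  have hform : |(m : ℝ)| * |linForm s t z| < |(m : ℝ)| * |linForm s t u| := by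
    rw [← abs_mul, ← linForm_smul, hz, map_add, linForm_smul, linForm_smul]
    refine (abs_add_le _ _).trans_lt ?_
    rw [abs_mul, abs_mul]
    nlinarith [h.abs_linForm_lt, h.abs_linForm_pos, abs_nonneg (linForm s t v)]
  exact (h.abs_linForm_le z hz0 (lt_of_mul_lt_mul_left hheight hm0.le)).not_gt
    (lt_of_mul_lt_mul_left hform hm0.le)

/-- Reduce `a` and `b` modulo `m` to the smallest absolute values: the quotient of the reduced
combination by `m` is too small to be nonzero. -/
lemma dvd_of_dvd_smul_add_smul (h : ConsecutiveBestApprox s t u v) {m a b : ℤ}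
    (hdvd : ∀ j, m ∣ (a • u + b • v) j) : m ∣ a ∧ m ∣ b := by
  have hind := LinearIndependent.pair_iff.1 h.linearIndependent
  choose y hy using hdvd
  have hy' : a • u + b • v = m • y := funext hy
  rcases eq_or_ne m 0 with rfl | hm
  · obtain ⟨rfl, rfl⟩ := hind a b (by rw [hy', zero_smul])
    exact ⟨dvd_rfl, dvd_rfl⟩
  obtain ⟨c, hc⟩ := exists_int_two_mul_abs_sub_mul_le a (Int.cast_ne_zero.2 hm)
  obtain ⟨d, hd⟩ := exists_int_two_mul_abs_sub_mul_le b (Int.cast_ne_zero.2 hm)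
  have hred : m • (y - c • u - d • v) = (a - c * m) • u + (b - d * m) • v := by
    rw [smul_sub, smul_sub, ← hy']
    module
  have hzero : y - c • u - d • v = 0 :=
    h.eq_zero_of_smul_eq hm (by exact_mod_cast hc) (by exact_mod_cast hd) hred
  obtain ⟨hac, hbd⟩ := hind (a - c * m) (b - d * m) (by rw [← hred, hzero, smul_zero])
  exact ⟨⟨c, by linarith⟩, ⟨d, by linarith⟩⟩

lemma isUnit_of_forall_dvd_cross (h : ConsecutiveBestApprox s t u v) {m : ℤ}
    (hm : ∀ j, m ∣ (u ⨯₃ v) j) : IsUnit m := by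
  choose c hc using hm
  have hdvd (j : Fin 3) : m ∣ u j := by
    refine (h.dvd_of_dvd_smul_add_smul (a := -v j) (b := u j) fun l => ?_).2
    have hcross : (m • c) ⨯₃ Pi.single j 1 = u j • v - v j • u := by
      rw [← show u ⨯₃ v = m • c from funext hc, cross_cross_eq_smul_sub_smul,
        dotProduct_single_one, dotProduct_single_one]
    rw [neg_smul, neg_add_eq_sub, ← hcross, map_smul, LinearMap.smul_apply]
    exact dvd_mul_right _ _
  have hone := (h.dvd_of_dvd_smul_add_smul (a := 1) (b := 0) fun j => by simpa using hdvd j).1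
  exact isUnit_of_dvd_one hone

lemma exists_tripleProduct_eq_one (h : ConsecutiveBestApprox s t u v) :
    ∃ w, w ⬝ᵥ u ⨯₃ v = 1 := by
  obtain ⟨g, hg⟩ := Finset.gcd_eq_sum_mul Finset.univ (u ⨯₃ v)
  obtain ⟨c, hc⟩ := (h.isUnit_of_forall_dvd_cross fun j =>
    Finset.gcd_dvd (Finset.mem_univ j)).exists_left_inv
  refine ⟨c • g, ?_⟩
  rw [smul_dotProduct, smul_eq_mul, dotProduct_comm, dotProduct, ← hg, hc]

lemma formMinor_ne_zero (h : ConsecutiveBestApprox s t u v)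
    (hinj : Function.Injective (linForm s t)) (hi : |(v i : ℝ)| = height v) :
    formMinor s t u v i ≠ 0 := by
  rw [formMinor_eq_linForm, map_ne_zero_iff _ hinj]
  intro h0
  rw [sub_eq_add_neg, ← neg_smul] at h0
  have hvi := (LinearIndependent.pair_iff.1 h.linearIndependent _ _ h0).1
  rw [hvi, Int.cast_zero, abs_zero] at hi
  exact h.height_pos.ne hi

end ConsecutiveBestApprox

section PositivePoints

variable {u w : Fin 3 → ℤ} {i : Fin 3}

lemma exists_mul_add_mul_pos {a b p q : ℤ} (hab : a * b ≤ 0) (hle : |a| ≤ |b|)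
    (hlt : b ^ 2 < |a * q - b * p|) :
    ∃ τ c : ℤ, |τ| = 1 ∧ τ * q + c * b ∈ Set.Ioc 0 |b| ∧
      0 < τ * p + c * a ∧ (τ * p + c * a) * |b| ≤ |a * q - b * p| := by
  wlog hb : 0 ≤ b generalizing a b
  · obtain ⟨τ, c, h⟩ := this (a := -a) (b := -b) (by linarith) (by simpa only [abs_neg] using hle)
      (by rw [neg_sq]; refine hlt.trans_eq (abs_eq_abs.2 (.inr (by ring)))) (by linarith)
    refine ⟨τ, -c, ?_⟩
    rw [abs_neg, show -a * q - -b * p = -(a * q - b * p) by ring, abs_neg] at h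
    simpa only [neg_mul_comm] using h
  have hb0 : 0 < b := by
    refine hb.lt_of_ne fun hb0 => hlt.not_ge ?_
    obtain rfl : a = 0 := by simpa [← hb0] using hle
    simp [← hb0]
  have ha : a ≤ 0 := by nlinarith
  rw [abs_of_nonpos ha, abs_of_pos hb0] at hle
  obtain ⟨τ, hτ, hD⟩ : ∃ τ : ℤ, |τ| = 1 ∧ τ * (b * p - a * q) = |a * q - b * p| := by
    rcases abs_cases (a * q - b * p) with ⟨h, -⟩ | ⟨h, -⟩
    exacts [⟨-1, rfl, by rw [h]; ring⟩, ⟨1, rfl, by rw [h]; ring⟩]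
  obtain ⟨c, ⟨hc, hcb⟩, -⟩ := existsUnique_add_zsmul_mem_Ioc hb0 (τ * q) 0
  rw [zero_add] at hcb
  rw [smul_eq_mul] at hc hcb
  have hval : (τ * p + c * a) * b = |a * q - b * p| + a * (τ * q + c * b) := by
    rw [← hD]; ring
  rw [abs_of_pos hb0]
  refine ⟨τ, c, hτ, ⟨hc, hcb⟩, pos_of_mul_pos_left ?_ hb, ?_⟩
  · nlinarith [hval]
  · nlinarith [hval]

lemma exists_pos_smul_add_smul (hu : u 0 * u 1 ≤ 0) (hi : i ≠ 2) (hui : |(u i : ℝ)| = height u)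
    (hw : height u ^ 2 < |(minor u w : ℝ)|) :
    ∃ τ c : ℤ, |τ| = 1 ∧ 0 < (τ • w + c • u) 0 ∧ 0 < (τ • w + c • u) 1 ∧
      |((τ • w + c • u) i : ℝ)| ≤ height u ∧
      height (τ • w + c • u) * height u ≤ |(minor u w : ℝ)| := by
  obtain ⟨j, hj, hij, hprod, hminor⟩ : ∃ j ≠ 2, (∀ l ≠ 2, l = i ∨ l = j) ∧
      u j * u i ≤ 0 ∧ |u j * w i - u i * w j| = |minor u w| := by
    fin_cases i
    · exact ⟨1, by decide, by decide, by rwa [mul_comm], abs_sub_comm _ _⟩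
    · exact ⟨0, by decide, by decide, hu, rfl⟩
    · exact absurd rfl hi
  have hle : |u j| ≤ |u i| := by exact_mod_cast (abs_le_height hj u).trans_eq hui.symm
  have hlt : u i ^ 2 < |u j * w i - u i * w j| := by
    rw [hminor, ← sq_abs]
    exact_mod_cast hui ▸ hw
  obtain ⟨τ, c, hτ, ⟨hi0, hile⟩, hj0, hjle⟩ := exists_mul_add_mul_pos hprod hle hlt
  set y := τ • w + c • u with hy
  have hyi : |(y i : ℝ)| ≤ height u := by
    rw [← hui]
    exact_mod_cast (abs_of_pos hi0).trans_le hile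
  have hyj : |(y j : ℝ)| * height u ≤ |(minor u w : ℝ)| := by
    rw [← hui]
    rw [hminor, ← abs_of_pos hj0] at hjle
    exact_mod_cast hjle
  have hpos : ∀ l ≠ 2, 0 < y l := fun l hl => by
    rcases hij l hl with rfl | rfl
    exacts [hi0, hj0]
  refine ⟨τ, c, hτ, hpos 0 (by decide), hpos 1 (by decide), hyi, ?_⟩
  obtain ⟨l, hl, hyl⟩ := exists_abs_eq_height y
  rw [← hyl]
  rcases hij l hl with rfl | rfl
  · nlinarith [height_nonneg u]
  · exact hyj

lemma exists_pos_of_height_sq_lt_abs_minor (s t : ℝ) (hu : u 0 * u 1 ≤ 0) (hi : i ≠ 2)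
    (hui : |(u i : ℝ)| = height u)
    (hw : height u ^ 2 < |(minor u w : ℝ)|) :
    ∃ y, 0 < y 0 ∧ 0 < y 1 ∧ height y * height u ≤ |(minor u w : ℝ)| ∧
      |linForm s t y| * height u ≤ |formMinor s t u w i| + |linForm s t u| * height u := by
  obtain ⟨τ, c, hτ, hy0, hy1, hyi, hyu⟩ := exists_pos_smul_add_smul hu hi hui hw
  refine ⟨_, hy0, hy1, hyu, ?_⟩
  set y := τ • w + c • u with hy
  have hA : |formMinor s t u y i| = |formMinor s t u w i| := by
    have hself : formMinor s t u u i = 0 := sub_self _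
    rw [hy, formMinor_add_smul_left, formMinor_smul_right, hself, mul_zero, sub_zero, abs_mul,
      ← Int.cast_abs, hτ, Int.cast_one, one_mul]
  calc |linForm s t y| * height u = |linForm s t u * y i - formMinor s t u y i| := by
        rw [← hui, ← abs_mul, formMinor, sub_sub_cancel]
    _ ≤ |linForm s t u| * |(y i : ℝ)| + |formMinor s t u w i| := by
        rw [← hA, ← abs_mul]
        exact abs_sub _ _
    _ ≤ _ := by
        rw [add_comm]
        gcongr

end PositivePoints

namespace ConsecutiveBestApprox

variable {s t : ℝ} {u v w : Fin 3 → ℤ} {i : Fin 3}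

lemma exists_pos_height_le (h : ConsecutiveBestApprox s t u v) (hv : v 0 * v 1 ≤ 0)
    (huv : minor u v ≠ 0) :
    ∃ y, 0 < y 0 ∧ 0 < y 1 ∧ height y ≤ 3 * height v ∧
      |linForm s t y| * |(minor u v : ℝ)| ≤ 8 * height v ^ 2 * |linForm s t u| := by
  have hH := h.height_pos
  have hD : 0 < |(minor u v : ℝ)| := abs_pos.2 (Int.cast_ne_zero.2 huv)
  have hDle : |(minor u v : ℝ)| ≤ 2 * height v ^ 2 := by
    nlinarith [abs_minor_le u v, h.height_lt]
  obtain ⟨i, hi, hvi⟩ := exists_abs_eq_height v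
  obtain ⟨m, hm, hmlt⟩ : ∃ m : ℤ, m * |(minor u v : ℝ)| ≤ height v ^ 2 + |(minor u v : ℝ)| ∧
      height v ^ 2 < m * |(minor u v : ℝ)| := by
    refine ⟨⌊height v ^ 2 / |(minor u v : ℝ)|⌋ + 1, ?_, ?_⟩
    · have := (le_div_iff₀ hD).1 (Int.floor_le (height v ^ 2 / |(minor u v : ℝ)|))
      push_cast
      linarith
    · rw [← div_lt_iff₀ hD]
      push_cast
      exact Int.lt_floor_add_one _
  have hm0 : (0 : ℝ) < m := pos_of_mul_pos_left ((pow_pos hH 2).trans hmlt) hD.le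
  have hminor : |(minor v (m • u) : ℝ)| = m * |(minor u v : ℝ)| := by
    rw [minor_smul_right, minor_comm, Int.cast_mul, Int.cast_neg, abs_mul, abs_neg,
      abs_of_pos hm0]
  obtain ⟨y, hy0, hy1, hyH, hyL⟩ := exists_pos_of_height_sq_lt_abs_minor s t hv hi hvi
    (hminor ▸ hmlt)
  rw [hminor] at hyH
  rw [formMinor_smul_right, formMinor_comm, abs_mul, abs_neg, abs_of_pos hm0] at hyL
  refine ⟨y, hy0, hy1, le_of_mul_le_mul_right ?_ hH, ?_⟩
  · linarith
  have hyL' : |linForm s t y| ≤ (2 * m + 1) * |linForm s t u| := by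
    refine le_of_mul_le_mul_right (hyL.trans ?_) hH
    have hA := mul_le_mul_of_nonneg_left (h.abs_formMinor_le_two_mul hi) hm0.le
    have hL := mul_le_mul_of_nonneg_right h.abs_linForm_lt.le hH.le
    linarith
  calc |linForm s t y| * |(minor u v : ℝ)|
      ≤ (2 * m + 1) * |linForm s t u| * |(minor u v : ℝ)| := by gcongr
    _ = (2 * (m * |(minor u v : ℝ)|) + |(minor u v : ℝ)|) * |linForm s t u| := by ring
    _ ≤ 8 * height v ^ 2 * |linForm s t u| := by gcongr; linarith

lemma exists_pos_height_mul_le (h : ConsecutiveBestApprox s t u v) (hu : u 0 * u 1 ≤ 0)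
    (hu0 : 0 < height u) (huv : height u ^ 2 ≤ 16 * |(minor u v : ℝ)|) :
    ∃ y, 0 < y 0 ∧ 0 < y 1 ∧ height y * height u ≤ 17 * |(minor u v : ℝ)| ∧
      |linForm s t y| * height u ≤ 35 * (|linForm s t u| * height v) := by
  obtain ⟨i, hi, hui⟩ := exists_abs_eq_height u
  have hminor : |(minor u ((17 : ℤ) • v) : ℝ)| = 17 * |(minor u v : ℝ)| := by
    rw [minor_smul_right, Int.cast_mul, abs_mul]; norm_num
  obtain ⟨y, hy0, hy1, hyH, hyL⟩ := exists_pos_of_height_sq_lt_abs_minor (w := (17 : ℤ) • v) s t hu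
    hi hui (by rw [hminor]; nlinarith)
  rw [hminor] at hyH
  rw [formMinor_smul_right, abs_mul, show |((17 : ℤ) : ℝ)| = 17 by norm_num] at hyL
  refine ⟨y, hy0, hy1, hyH, hyL.trans ?_⟩
  have hA := h.abs_formMinor_le_two_mul hi
  have hL := mul_le_mul_of_nonneg_left h.height_lt.le (abs_nonneg (linForm s t u))
  linarith

/-- The signs of `u` and `v` agree in both coordinates, so `u - v` competes with `v`. -/
lemma two_mul_abs_linForm_le (h : ConsecutiveBestApprox s t u v) (hu : u 0 * u 1 ≤ 0)
    (hv : v 0 * v 1 ≤ 0) (hi : i ≠ 2) (huv : 0 < u i * v i)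
    (hL : 0 ≤ linForm s t u * linForm s t v) : 2 * |linForm s t v| ≤ |linForm s t u| := by
  have hsign : 0 ≤ u 0 * v 0 ∧ 0 ≤ u 1 * v 1 := by
    have hprod : 0 ≤ (u 0 * v 0) * (u 1 * v 1) := by nlinarith
    fin_cases i
    · exact ⟨huv.le, nonneg_of_mul_nonneg_right hprod huv⟩
    · exact ⟨nonneg_of_mul_nonneg_left hprod huv, huv.le⟩
    · exact absurd rfl hi
  have hne : u - v ≠ 0 := fun h0 => h.height_lt.ne (congrArg height (sub_eq_zero.1 h0))
  have hheight : height (u - v) ≤ height v := by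
    have habs {j : Fin 3} (hj : j ≠ 2) (huvj : 0 ≤ u j * v j) : |((u - v) j : ℝ)| ≤ height v := by
      have huj := abs_le.1 ((abs_le_height hj u).trans h.height_lt.le)
      have hvj := abs_le.1 (abs_le_height hj v)
      have huvj' : 0 ≤ (u j : ℝ) * v j := by exact_mod_cast huvj
      rw [Pi.sub_apply, Int.cast_sub, abs_le]
      rcases nonneg_and_nonneg_or_nonpos_and_nonpos_of_mul_nonneg huvj' with hj' | hj' <;>
        constructor <;> linarith
    exact max_le (habs (by decide) hsign.1) (habs (by decide) hsign.2)
  have hle := h.isBestApprox.abs_linForm_le (u - v) hne hheight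
  have habs : |linForm s t (u - v)| = |linForm s t u| - |linForm s t v| := by
    have hlt := h.abs_linForm_lt
    rw [map_sub]
    rcases nonneg_and_nonneg_or_nonpos_and_nonpos_of_mul_nonneg hL with ⟨hLu, hLv⟩ | ⟨hLu, hLv⟩
    · rw [abs_of_nonneg hLu, abs_of_nonneg hLv] at hlt ⊢
      exact abs_of_pos (sub_pos.2 hlt)
    · rw [abs_of_nonpos hLu, abs_of_nonpos hLv] at hlt ⊢
      rw [abs_of_neg (by linarith)]
      ring
  linarith

lemma abs_linForm_mul_height_le_two_mul_abs_formMinor (h : ConsecutiveBestApprox s t u v)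
    (hu : u 0 * u 1 ≤ 0) (hv : v 0 * v 1 ≤ 0) (hi : i ≠ 2) (hvi : |(v i : ℝ)| = height v) :
    |linForm s t u| * height v ≤ 2 * |formMinor s t u v i| := by
  wlog hL : 0 ≤ linForm s t u * linForm s t v generalizing v
  · have := this h.neg_right (by simpa using hv) (by simpa [height_neg] using hvi)
      (by rw [map_neg]; linarith)
    rwa [height_neg, ← neg_one_zsmul, formMinor_smul_right, abs_mul,
      show |((-1 : ℤ) : ℝ)| = 1 by norm_num, one_mul] at this
  rcases le_or_gt (u i * v i) 0 with huv | huv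
  · have hsq : (linForm s t u * v i) ^ 2 ≤ formMinor s t u v i ^ 2 := by
      have huv' : (u i : ℝ) * v i ≤ 0 := by exact_mod_cast huv
      rw [formMinor]
      nlinarith [sq_nonneg (linForm s t v * u i)]
    have habs := sq_le_sq.1 hsq
    rw [abs_mul, hvi] at habs
    linarith [abs_nonneg (formMinor s t u v i)]
  · have hsub := h.two_mul_abs_linForm_le hu hv hi huv hL
    have hA : |linForm s t u| * height v ≤
        |formMinor s t u v i| + |linForm s t v| * height u := by
      rw [← hvi, ← abs_mul, ← sub_add_cancel (linForm s t u * v i) (linForm s t v * u i)]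
      refine (abs_add_le _ _).trans (add_le_add_right ?_ _)
      rw [abs_mul]
      exact mul_le_mul_of_nonneg_left (abs_le_height hi u) (abs_nonneg _)
    have := mul_le_mul hsub h.height_lt.le (height_nonneg u) (abs_nonneg _)
    linarith

lemma abs_tripleProduct_mul_sub_le (hv : 0 < height v) (hi : i ≠ 2)
    (huv : 16 * |(minor u v : ℝ)| ≤ height v ^ 2) (hvw : |formMinor s t v w i| * height v ≤ 8) :
    2 * |((w ⬝ᵥ u ⨯₃ v : ℤ) : ℝ) * v i - minor v w * formMinor s t u v i| ≤ height v := by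
  rw [tripleProduct_mul_eq hi s t, sub_sub_cancel_left, abs_neg, abs_mul]
  have hmul := mul_le_mul huv hvw (by positivity) (by positivity)
  nlinarith [pow_pos hv 2]

lemma height_sq_le_of_height_le_mul_abs_formMinor (h : ConsecutiveBestApprox s t u v) (hi : i ≠ 2)
    {m : ℝ} (hm : 0 ≤ m) (hle : height v ≤ 2 * (m * |formMinor s t u v i|)) :
    height v ^ 2 ≤ 16 * m := by
  have hH := h.height_pos
  calc height v ^ 2 = height v * height v := sq _
    _ ≤ height v * (2 * (m * (2 * (|linForm s t u| * height v)))) := by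
        gcongr
        exact hle.trans (by gcongr; exact h.abs_formMinor_le_two_mul hi)
    _ = 4 * m * (|linForm s t u| * height v ^ 2) := by ring
    _ ≤ 4 * m * 4 := by gcongr; exact h.abs_linForm_mul_height_sq_le
    _ = 16 * m := by ring

lemma height_sq_le_mul_abs_minor (h : ConsecutiveBestApprox s t u v)
    (h' : ConsecutiveBestApprox s t v w) (huv : 16 * |(minor u v : ℝ)| ≤ height v ^ 2)
    (hdet : w ⬝ᵥ u ⨯₃ v ≠ 0) : height v ^ 2 ≤ 16 * |(minor v w : ℝ)| := by
  have hH := h.height_pos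
  have hH' := h'.height_pos
  obtain ⟨i, hi, hvi⟩ := exists_abs_eq_height v
  have hvw : |formMinor s t v w i| * height v ≤ 8 := by
    have hL := h'.abs_linForm_mul_height_sq_le
    have hmul := mul_le_mul (h'.abs_formMinor_le_two_mul hi) h'.height_lt.le hH.le (by positivity)
    linarith
  have hdiff := abs_tripleProduct_mul_sub_le hH hi huv hvw
  have hdet' : height v ≤ |((w ⬝ᵥ u ⨯₃ v : ℤ) : ℝ) * v i| := by
    rw [abs_mul, hvi]
    exact le_mul_of_one_le_left hH.le (by exact_mod_cast Int.one_le_abs hdet)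
  refine h.height_sq_le_of_height_le_mul_abs_formMinor hi (abs_nonneg _) ?_
  rw [← abs_mul]
  linarith [abs_sub_abs_le_abs_sub (((w ⬝ᵥ u ⨯₃ v : ℤ) : ℝ) * v i)
    (minor v w * formMinor s t u v i)]

lemma exists_tripleProduct_eq_one_and_abs_formMinor_le (h : ConsecutiveBestApprox s t u v)
    (hA : formMinor s t u v i ≠ 0) :
    ∃ w, w ⬝ᵥ u ⨯₃ v = 1 ∧ 2 * |formMinor s t v w i| ≤ |formMinor s t u v i| := by
  obtain ⟨w, hw⟩ := h.exists_tripleProduct_eq_one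
  obtain ⟨c, hc⟩ := exists_int_two_mul_abs_sub_mul_le (formMinor s t v w i) hA
  refine ⟨w + c • u, ?_, by rwa [formMinor_add_smul_left]⟩
  rw [add_dotProduct, smul_dotProduct, dot_self_cross, smul_zero, add_zero, hw]

lemma exists_abs_minor_mul_abs_formMinor_mem_Icc (h : ConsecutiveBestApprox s t u v) (hi : i ≠ 2)
    (hvi : |(v i : ℝ)| = height v) (hA : formMinor s t u v i ≠ 0)
    (huv : 16 * |(minor u v : ℝ)| ≤ height v ^ 2) :
    ∃ w, 2 * (|(minor v w : ℝ)| * |formMinor s t u v i|) ∈ Set.Icc (height v) (3 * height v) ∧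
      2 * |formMinor s t v w i| ≤ |formMinor s t u v i| := by
  have hH := h.height_pos
  have hsq := h.abs_linForm_mul_height_sq_le
  have hAle := h.abs_formMinor_le_two_mul hi
  obtain ⟨w, hw, hvw⟩ := h.exists_tripleProduct_eq_one_and_abs_formMinor_le hA
  have hdiff := abs_tripleProduct_mul_sub_le (w := w) (s := s) (t := t) hH hi huv (by nlinarith)
  rw [hw, Int.cast_one, one_mul] at hdiff
  have htriangle := abs_sub_abs_le_abs_sub (v i : ℝ) (minor v w * formMinor s t u v i)
  have htriangle' := abs_sub_abs_le_abs_sub (minor v w * formMinor s t u v i) (v i : ℝ)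
  rw [abs_sub_comm] at htriangle'
  refine ⟨w, ?_, hvw⟩
  rw [← abs_mul]
  constructor <;> linarith

lemma exists_pos_abs_linForm_le (h : ConsecutiveBestApprox s t u v)
    (hinj : Function.Injective (linForm s t)) (hu : u 0 * u 1 ≤ 0) (hv : v 0 * v 1 ≤ 0)
    (huv : 16 * |(minor u v : ℝ)| ≤ height v ^ 2) :
    ∃ y, 0 < y 0 ∧ 0 < y 1 ∧ height y * (|linForm s t u| * height v) ≤ 51 ∧
      |linForm s t y| ≤ 18 * |linForm s t u| := by
  have hH := h.height_pos
  obtain ⟨i, hi, hvi⟩ := exists_abs_eq_height v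
  have hAle := h.abs_formMinor_le_two_mul hi
  have hleA := h.abs_linForm_mul_height_le_two_mul_abs_formMinor hu hv hi hvi
  obtain ⟨w, ⟨hlower, hupper⟩, hvw⟩ := h.exists_abs_minor_mul_abs_formMinor_mem_Icc hi hvi
    (h.formMinor_ne_zero hinj hvi) huv
  have hminor : |(minor v ((17 : ℤ) • w) : ℝ)| = 17 * |(minor v w : ℝ)| := by
    rw [minor_smul_right, Int.cast_mul, abs_mul]; norm_num
  have hminor_lower := h.height_sq_le_of_height_le_mul_abs_formMinor hi (abs_nonneg _) hlower
  obtain ⟨y, hy0, hy1, hyH, hyL⟩ := exists_pos_of_height_sq_lt_abs_minor (w := (17 : ℤ) • w) s t hv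
    hi hvi (by rw [hminor]; nlinarith)
  rw [hminor] at hyH
  rw [formMinor_smul_right, abs_mul, show |((17 : ℤ) : ℝ)| = 17 by norm_num] at hyL
  refine ⟨y, hy0, hy1, le_of_mul_le_mul_right ?_ hH, le_of_mul_le_mul_right ?_ hH⟩
  · calc height y * (|linForm s t u| * height v) * height v
        = height y * height v * (|linForm s t u| * height v) := by ring
      _ ≤ 17 * |(minor v w : ℝ)| * (2 * |formMinor s t u v i|) := by gcongr
      _ ≤ 51 * height v := by linarith
  · have := mul_le_mul_of_nonneg_right h.abs_linForm_lt.le hH.le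
    linarith

end ConsecutiveBestApprox

namespace ConsecutiveBestApprox

variable {s t : ℝ} {u v w : Fin 3 → ℤ}

lemma exists_cross_eq_smul (h : ConsecutiveBestApprox s t u v)
    (h' : ConsecutiveBestApprox s t v w) (hdet : w ⬝ᵥ u ⨯₃ v = 0) :
    ∃ c : ℤ, c ≠ 0 ∧ v ⨯₃ w = c • u ⨯₃ v := by
  obtain ⟨z, hz⟩ := h.exists_tripleProduct_eq_one
  obtain ⟨z', hz'⟩ := h'.exists_tripleProduct_eq_one
  have hcross : (u ⨯₃ v) ⨯₃ (v ⨯₃ w) = 0 := by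
    rw [cross_cross_eq_smul_sub_smul, dot_self_cross, zero_smul, sub_zero,
      triple_product_permutation, triple_product_permutation, hdet, zero_smul]
  have hsmul : v ⨯₃ w = ((v ⨯₃ w) ⬝ᵥ z) • u ⨯₃ v := by
    have hzero := cross_cross_eq_smul_sub_smul (u ⨯₃ v) (v ⨯₃ w) z
    rw [hcross, map_zero, LinearMap.zero_apply, dotProduct_comm, hz, one_smul] at hzero
    exact sub_eq_zero.1 hzero.symm
  refine ⟨_, fun hc => ?_, hsmul⟩
  rw [hsmul, hc, zero_smul, dotProduct_zero] at hz'
  exact zero_ne_one hz'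

lemma abs_formMinor_le_of_tripleProduct_eq_zero (h : ConsecutiveBestApprox s t u v)
    (h' : ConsecutiveBestApprox s t v w) (hdet : w ⬝ᵥ u ⨯₃ v = 0) (i : Fin 3) :
    |formMinor s t u v i| ≤ |formMinor s t v w i| := by
  obtain ⟨c, hc, hcross⟩ := h.exists_cross_eq_smul h' hdet
  rw [formMinor_eq_mul_of_cross_eq_smul hcross, abs_mul]
  exact le_mul_of_one_le_left (abs_nonneg _) (by exact_mod_cast Int.one_le_abs hc)

end ConsecutiveBestApprox

section Sequence

variable {s t p : ℝ} {x : ℕ → Fin 3 → ℤ}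

lemma tendsto_height (hx : ∀ k, ConsecutiveBestApprox s t (x k) (x (k + 1))) :
    Tendsto (fun k => height (x k)) atTop atTop := by
  have hanti : StrictAnti fun k => |linForm s t (x k)| :=
    strictAnti_nat_of_succ_lt fun k => (hx k).abs_linForm_lt
  have hmono : StrictMono fun k => height (x k) := strictMono_nat_of_lt_succ fun k =>
    (hx k).height_lt
  refine tendsto_atTop_atTop_of_monotone hmono.monotone fun B => ?_
  by_contra! hB
  have hinj : Function.Injective x := fun k l hkl => hanti.injective (by simp only [hkl])
  refine Set.infinite_range_of_injective hinj
    ((finite_setOf_height_le_abs_linForm_le s t B |linForm s t (x 0)|).subset ?_)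
  rintro _ ⟨k, rfl⟩
  exact ⟨(hB k).le, hanti.antitone k.zero_le⟩

lemma tendsto_abs_linForm_mul_rpow (hx : ∀ k, ConsecutiveBestApprox s t (x k) (x (k + 1)))
    (hp : p < 2) :
    Tendsto (fun k => |linForm s t (x k)| * height (x (k + 1)) ^ p) atTop (nhds 0) := by
  have hlim : Tendsto (fun k => 4 * height (x (k + 1)) ^ (-(2 - p))) atTop (nhds 0) := by
    simpa using (((tendsto_rpow_neg_atTop (sub_pos.2 hp)).comp
      ((tendsto_add_atTop_iff_nat 1).2 (tendsto_height hx))).const_mul 4)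
  refine squeeze_zero (fun k => mul_nonneg (abs_nonneg _) (Real.rpow_nonneg (height_nonneg _) _))
    (fun k => ?_) hlim
  have hH := (hx k).height_pos
  calc |linForm s t (x k)| * height (x (k + 1)) ^ p
      = |linForm s t (x k)| * height (x (k + 1)) ^ 2 * height (x (k + 1)) ^ (-(2 - p)) := by
        rw [mul_assoc, ← Real.rpow_two, ← Real.rpow_add hH]; ring_nf
    _ ≤ 4 * height (x (k + 1)) ^ (-(2 - p)) := by
        gcongr
        exact (hx k).abs_linForm_mul_height_sq_le

/-- Otherwise the planes spanned by consecutive terms are eventually all equal, and then the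
normal vectors only grow, whereas `formMinor` tends to zero. -/
lemma frequently_tripleProduct_ne_zero (hinj : Function.Injective (linForm s t))
    (hx : ∀ k, ConsecutiveBestApprox s t (x k) (x (k + 1))) :
    ∃ᶠ k in atTop, x (k + 2) ⬝ᵥ x k ⨯₃ x (k + 1) ≠ 0 := by
  intro hdet
  obtain ⟨K, hK⟩ := eventually_atTop.1 hdet
  obtain ⟨i, hi, hxi⟩ := exists_abs_eq_height (x (K + 1))
  let A (k : ℕ) : ℝ := |formMinor s t (x k) (x (k + 1)) i|
  have hmono : Monotone fun n => A (n + K) := monotone_nat_of_le_succ fun n => by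
    rw [add_right_comm]
    exact (hx _).abs_formMinor_le_of_tripleProduct_eq_zero (hx _)
      (not_not.1 (hK (n + K) (Nat.le_add_left K n))) i
  have hlim : Tendsto (fun n => A (n + K)) atTop (nhds 0) := by
    refine (tendsto_add_atTop_iff_nat K).2 (squeeze_zero (fun _ => abs_nonneg _)
      (fun k => (hx k).abs_formMinor_le_two_mul hi) ?_)
    simpa using (tendsto_abs_linForm_mul_rpow hx one_lt_two).const_mul 2
  have hA : A K ≤ 0 := by simpa using hmono.ge_of_tendsto hlim 0
  exact (hx K).formMinor_ne_zero hinj hxi (abs_nonpos_iff.1 hA)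

end Sequence

/-- No integer vector with positive first two coordinates has approximation quality, measured with
exponent `p`, better than `ε`. This is the hypothesis to be refuted for `p = φ` and `ε > 0`. -/
def IsPosLowerBound (s t p ε : ℝ) : Prop :=
  ∀ y : Fin 3 → ℤ, 0 < y 0 → 0 < y 1 → ε ≤ |linForm s t y| * height y ^ p

namespace IsPosLowerBound

variable {s t p ε S : ℝ} {u v y : Fin 3 → ℤ} {x : ℕ → Fin 3 → ℤ}

lemma le_mul_rpow (hb : IsPosLowerBound s t p ε) (hp : 0 ≤ p) (hy0 : 0 < y 0) (hy1 : 0 < y 1)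
    (hS : height y ≤ S) : ε ≤ |linForm s t y| * S ^ p :=
  (hb y hy0 hy1).trans <| mul_le_mul_of_nonneg_left
    (Real.rpow_le_rpow (height_nonneg y) hS hp) (abs_nonneg _)

lemma mul_nonpos_of_abs_linForm_mul_rpow_lt (hb : IsPosLowerBound s t p ε)
    (hu : |linForm s t u| * height u ^ p < ε) : u 0 * u 1 ≤ 0 := by
  by_contra! hpos
  rcases pos_and_pos_or_neg_and_neg_of_mul_pos hpos with ⟨h0, h1⟩ | ⟨h0, h1⟩
  · exact (hb u h0 h1).not_gt hu
  · have hneg := hb (-u) (neg_pos.2 h0) (neg_pos.2 h1)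
    rw [map_neg, abs_neg, height_neg] at hneg
    exact hneg.not_gt hu

lemma mul_abs_minor_le (hb : IsPosLowerBound s t p ε) (hp : 0 ≤ p)
    (h : ConsecutiveBestApprox s t u v) (hv : v 0 * v 1 ≤ 0) :
    ε * |(minor u v : ℝ)| ≤ 8 * 3 ^ p * (|linForm s t u| * height v ^ p) * height v ^ 2 := by
  have hH := h.height_pos
  rcases eq_or_ne (minor u v) 0 with huv | huv
  · rw [huv, Int.cast_zero, abs_zero, mul_zero]
    positivity
  obtain ⟨y, hy0, hy1, hyH, hyL⟩ := h.exists_pos_height_le hv huv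
  calc ε * |(minor u v : ℝ)|
      ≤ |linForm s t y| * (3 * height v) ^ p * |(minor u v : ℝ)| := by
        gcongr
        exact hb.le_mul_rpow hp hy0 hy1 hyH
    _ = |linForm s t y| * |(minor u v : ℝ)| * (3 ^ p * height v ^ p) := by
        rw [Real.mul_rpow zero_le_three hH.le]; ring
    _ ≤ 8 * height v ^ 2 * |linForm s t u| * (3 ^ p * height v ^ p) := by gcongr
    _ = 8 * 3 ^ p * (|linForm s t u| * height v ^ p) * height v ^ 2 := by ring

/-- The golden ratio enters here: a positive point bounds
`|linForm s t u| ^ (φ - 1) * height v ^ φ`, and since `φ ^ 2 = φ + 1` the `φ`-th power of this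
product has the asserted form. -/
lemma abs_linForm_mul_rpow_le (hb : IsPosLowerBound s t φ ε) (hε : 0 < ε)
    (h : ConsecutiveBestApprox s t u v) (hinj : Function.Injective (linForm s t))
    (hu : u 0 * u 1 ≤ 0) (hv : v 0 * v 1 ≤ 0)
    (huv : 16 * |(minor u v : ℝ)| ≤ height v ^ 2) :
    |linForm s t u| * height v ^ (φ + 1) ≤ (18 * 51 ^ φ / ε) ^ φ := by
  have hH := h.height_pos
  have hL := h.abs_linForm_pos
  obtain ⟨y, hy0, hy1, hyH, hyL⟩ := h.exists_pos_abs_linForm_le hinj hu hv huv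
  have hle : ε ≤ 18 * |linForm s t u| * (51 / (|linForm s t u| * height v)) ^ φ :=
    (hb.le_mul_rpow Real.goldenRatio_pos.le hy0 hy1
      ((le_div_iff₀ (mul_pos hL hH)).2 hyH)).trans (by gcongr)
  have hroot : |linForm s t u| ^ (φ - 1) * height v ^ φ ≤ 18 * 51 ^ φ / ε := by
    rw [le_div_iff₀ hε]
    calc |linForm s t u| ^ (φ - 1) * height v ^ φ * ε
        ≤ |linForm s t u| ^ (φ - 1) * height v ^ φ *
          (18 * |linForm s t u| * (51 / (|linForm s t u| * height v)) ^ φ) := by gcongr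
      _ = 18 * 51 ^ φ := by
          rw [Real.rpow_sub_one hL.ne', Real.div_rpow (by norm_num) (by positivity),
            Real.mul_rpow hL.le hH.le]
          field_simp
  calc |linForm s t u| * height v ^ (φ + 1)
      = (|linForm s t u| ^ (φ - 1) * height v ^ φ) ^ φ := by
        rw [Real.mul_rpow (by positivity) (by positivity), ← Real.rpow_mul hL.le,
          ← Real.rpow_mul hH.le, sub_mul, ← sq, one_mul, Real.goldenRatio_sq,
          add_sub_cancel_left, Real.rpow_one]
    _ ≤ (18 * 51 ^ φ / ε) ^ φ :=
        Real.rpow_le_rpow (by positivity) hroot Real.goldenRatio_pos.le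

lemma mul_height_le (hb : IsPosLowerBound s t p ε) (hp : 0 ≤ p)
    (h : ConsecutiveBestApprox s t u v) (hu : u 0 * u 1 ≤ 0) (hu0 : 0 < height u)
    (huv : height u ^ 2 ≤ 16 * |(minor u v : ℝ)|) :
    ε * height u ≤ 35 * 34 ^ p * (|linForm s t u| * height v ^ (p + 1)) := by
  have hH := h.height_pos
  obtain ⟨y, hy0, hy1, hyH, hyL⟩ := h.exists_pos_height_mul_le hu hu0 huv
  have hyv : height y ≤ 34 * height v := by
    refine le_of_mul_le_mul_right ?_ hu0
    linarith [abs_minor_le u v]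
  calc ε * height u
      ≤ |linForm s t y| * (34 * height v) ^ p * height u := by
        gcongr
        exact hb.le_mul_rpow hp hy0 hy1 hyv
    _ = |linForm s t y| * height u * (34 ^ p * height v ^ p) := by
        rw [Real.mul_rpow (by norm_num) hH.le]; ring
    _ ≤ 35 * (|linForm s t u| * height v) * (34 ^ p * height v ^ p) := by gcongr
    _ = 35 * 34 ^ p * (|linForm s t u| * height v ^ (p + 1)) := by
        rw [Real.rpow_add_one hH.ne']; ring

lemma eventually_mul_nonpos (hb : IsPosLowerBound s t p ε) (hε : 0 < ε) (hp0 : 0 ≤ p)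
    (hp : p < 2) (hx : ∀ k, ConsecutiveBestApprox s t (x k) (x (k + 1))) :
    ∀ᶠ k in atTop, x k 0 * x k 1 ≤ 0 := by
  filter_upwards [(tendsto_abs_linForm_mul_rpow hx hp).eventually_lt_const hε] with k hk
  refine hb.mul_nonpos_of_abs_linForm_mul_rpow_lt (lt_of_le_of_lt ?_ hk)
  gcongr
  exacts [height_nonneg _, (hx k).height_lt.le]

lemma eventually_abs_minor_le_sq (hb : IsPosLowerBound s t p ε) (hε : 0 < ε) (hp0 : 0 ≤ p)
    (hp : p < 2) (hx : ∀ k, ConsecutiveBestApprox s t (x k) (x (k + 1))) :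
    ∀ᶠ k in atTop, 16 * |(minor (x k) (x (k + 1)) : ℝ)| ≤ height (x (k + 1)) ^ 2 := by
  have hlim : Tendsto (fun k => 128 * 3 ^ p * (|linForm s t (x k)| * height (x (k + 1)) ^ p))
      atTop (nhds 0) := by
    simpa using (tendsto_abs_linForm_mul_rpow hx hp).const_mul (128 * 3 ^ p)
  have hsign := (tendsto_add_atTop_nat 1).eventually (hb.eventually_mul_nonpos hε hp0 hp hx)
  filter_upwards [hlim.eventually_lt_const hε, hsign] with k hk hk1
  have hminor := hb.mul_abs_minor_le hp0 (hx k) hk1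
  refine le_of_mul_le_mul_left ?_ hε
  nlinarith [pow_pos (hx k).height_pos 2]

lemma eventually_abs_linForm_mul_rpow_le (hb : IsPosLowerBound s t φ ε) (hε : 0 < ε)
    (hinj : Function.Injective (linForm s t))
    (hx : ∀ k, ConsecutiveBestApprox s t (x k) (x (k + 1))) :
    ∀ᶠ k in atTop,
      |linForm s t (x k)| * height (x (k + 1)) ^ (φ + 1) ≤ (18 * 51 ^ φ / ε) ^ φ := by
  have hp0 := Real.goldenRatio_pos.le
  have hp := Real.goldenRatio_lt_two
  have hsign := hb.eventually_mul_nonpos hε hp0 hp hx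
  filter_upwards [hsign, (tendsto_add_atTop_nat 1).eventually hsign,
    hb.eventually_abs_minor_le_sq hε hp0 hp hx] with k hk hk1 hminor
  exact hb.abs_linForm_mul_rpow_le hε (hx k) hinj hk hk1 hminor

end IsPosLowerBound

section Main

variable {s t ε : ℝ}

lemma not_isPosLowerBound_goldenRatio (hinj : Function.Injective (linForm s t)) (hε : 0 < ε) :
    ¬ IsPosLowerBound s t φ ε := by
  intro hb
  have hp0 := Real.goldenRatio_pos.le
  have hp := Real.goldenRatio_lt_two
  obtain ⟨x, hx⟩ := exists_seq_consecutiveBestApprox hinj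
  have hnext := tendsto_add_atTop_nat 1
  have hlarge := (((tendsto_height hx).comp hnext).const_mul_atTop hε).eventually_gt_atTop
    (35 * 34 ^ φ * (18 * 51 ^ φ / ε) ^ φ)
  obtain ⟨k, hdet, hlarge, hsign, hminor, hform⟩ :=
    ((frequently_tripleProduct_ne_zero hinj hx).and_eventually <| hlarge.and <|
      (hnext.eventually (hb.eventually_mul_nonpos hε hp0 hp hx)).and <|
      (hb.eventually_abs_minor_le_sq hε hp0 hp hx).and <|
      hnext.eventually (hb.eventually_abs_linForm_mul_rpow_le hε hinj hx)).exists
  refine hlarge.not_ge ((hb.mul_height_le hp0 (hx (k + 1)) hsign (hx k).height_pos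
    ((hx k).height_sq_le_mul_abs_minor (hx (k + 1)) hminor hdet)).trans ?_)
  gcongr

lemma exists_pos_linForm_mul_rpow_goldenRatio_lt (hinj : Function.Injective (linForm s t))
    (hε : 0 < ε) : ∃ y, 0 < y 0 ∧ 0 < y 1 ∧ |linForm s t y| * height y ^ φ < ε := by
  simpa [IsPosLowerBound] using not_isPosLowerBound_goldenRatio hinj hε

lemma height_eq_max {y : Fin 3 → ℤ} (hy0 : 0 < y 0) (hy1 : 0 < y 1) :
    height y = (max (y 0) (y 1) : ℤ) := by
  rw [height, abs_of_pos (Int.cast_pos.2 hy0), abs_of_pos (Int.cast_pos.2 hy1), Int.cast_max]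

lemma nint_le_abs_linForm (s t : ℝ) (y : Fin 3 → ℤ) :
    nint (s * y 0 + t * y 1) ≤ |linForm s t y| := by
  simpa [nint, linForm_apply] using round_le (s * y 0 + t * y 1) (-y 2)

end Main

/-- W.M. Schmidt's theorem on approximation with positive integer variables. -/
theorem stmt15 (θ₁ θ₂ : ℝ)
    (hindep : ∀ a b c : ℤ, (a : ℝ) * θ₁ + (b : ℝ) * θ₂ + (c : ℝ) = 0 →
      a = 0 ∧ b = 0 ∧ c = 0) :
    ∃ x₁ x₂ : ℕ → ℤ, (∀ i, 0 < x₁ i ∧ 0 < x₂ i) ∧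
      Tendsto (fun i => nint (θ₁ * x₁ i + θ₂ * x₂ i) *
        ((max (x₁ i) (x₂ i) : ℤ) : ℝ) ^ ((1 + Real.sqrt 5) / 2)) atTop (nhds 0) := by
  have hinj : Function.Injective (linForm θ₁ θ₂) := by
    refine (injective_iff_map_eq_zero _).2 fun z hz => ?_
    obtain ⟨h0, h1, h2⟩ := hindep (z 0) (z 1) (z 2) (by rw [← hz, linForm_apply]; ring)
    funext i
    fin_cases i
    exacts [h0, h1, h2]
  choose y hy0 hy1 hyL using fun n : ℕ =>
    exists_pos_linForm_mul_rpow_goldenRatio_lt hinj (Nat.one_div_pos_of_nat (α := ℝ) (n := n))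
  refine ⟨fun n => y n 0, fun n => y n 1, fun n => ⟨hy0 n, hy1 n⟩, ?_⟩
  have hpow (n : ℕ) := Real.rpow_nonneg (height_nonneg (y n)) φ
  simp only [← height_eq_max (hy0 _) (hy1 _)]
  exact squeeze_zero (fun n => mul_nonneg (abs_nonneg _) (hpow n))
    (fun n => (mul_le_mul_of_nonneg_right (nint_le_abs_linForm _ _ _) (hpow n)).trans (hyL n).le)
    tendsto_one_div_add_atTop_nhds_zero_nat
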